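/- arXiv:2604.22668 — 2 statements merged into one kernel-verified Lean document; each statement's English description precedes it below -/
import Mathlib

section
/- (Theorem 2.2: the fundamental theorem of Γ-convergence, cluster-point form.) Let X be a topological space, F_q : X → EReal (q ∈ ℕ) a sequence of functions and F : X → EReal. Assume F_q Γ-converges to F, i.e. Γ-liminf F_q(x) = Γ-limsup F_q(x) = F(x) for every x ∈ X. Suppose for each q the point x_q ∈ X is a minimizer of F_q (F_q(x_q) ≤ F_q(y) for all y ∈ X), and suppose x* ∈ X is a cluster point of the sequence (x_q) (every neighborhood of x* contains x_q for infinitely many q). Then x* is a minimizer of F: F(x*) ≤ F(y) for all y ∈ X. -/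
open Filter

noncomputable section

/-- Γ-lower limit of a sequence of extended-real-valued functionals. -/
def gammaLiminf {X : Type*} [TopologicalSpace X] (F : ℕ → X → EReal) (x : X) : EReal :=
  ⨆ N ∈ nhds x, Filter.liminf (fun q => ⨅ y ∈ N, F q y) atTop

/-- Γ-upper limit of a sequence of extended-real-valued functionals. -/
def gammaLimsup {X : Type*} [TopologicalSpace X] (F : ℕ → X → EReal) (x : X) : EReal :=
  ⨆ N ∈ nhds x, Filter.limsup (fun q => ⨅ y ∈ N, F q y) atTop

/-- `F_q` Γ-converges to `F`. -/
def GammaConvergesTo {X : Type*} [TopologicalSpace X]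
    (F : ℕ → X → EReal) (Flim : X → EReal) : Prop :=
  ∀ x : X, gammaLiminf F x = Flim x ∧ gammaLimsup F x = Flim x

section

variable {X : Type*}

theorem liminf_iInf_mem_le_limsup_of_frequently_mem {ι α : Type*} [CompleteLinearOrder α]
    {l : Filter ι} {F : ι → X → α} {xs : ι → X} {N : Set X} (hN : ∃ᶠ q in l, xs q ∈ N) :
    liminf (fun q => ⨅ y ∈ N, F q y) l ≤ limsup (fun q => F q (xs q)) l :=
  liminf_le_limsup_of_frequently_le (hN.mono fun q hq => iInf₂_le (xs q) hq)

variable [TopologicalSpace X] {F : ℕ → X → EReal}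

theorem gammaLiminf_le_limsup_of_mapClusterPt {xs : ℕ → X} {x : X}
    (hx : MapClusterPt x atTop xs) : gammaLiminf F x ≤ limsup (fun q => F q (xs q)) atTop :=
  iSup₂_le fun _ hN => liminf_iInf_mem_le_limsup_of_frequently_mem (hx.frequently hN)

theorem limsup_iInf_le_gammaLimsup (x : X) :
    limsup (fun q => ⨅ y, F q y) atTop ≤ gammaLimsup F x :=
  le_iSup₂_of_le Set.univ univ_mem (by simp only [iInf_univ, le_refl])

/-- The hypothesis `hmin` allows approximate minimizers, such as
`F q (xs q) ≤ (⨅ y, F q y) + ε q` with real `ε q → 0`. -/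
theorem fundamental_theorem_gamma_convergence_general {xs : ℕ → X} {xstar : X}
    (hmin : limsup (fun q => F q (xs q)) atTop ≤ limsup (fun q => ⨅ y, F q y) atTop)
    (hcluster : MapClusterPt xstar atTop xs) (y : X) :
    gammaLiminf F xstar ≤ gammaLimsup F y :=
  calc
    gammaLiminf F xstar ≤ limsup (fun q => F q (xs q)) atTop :=
      gammaLiminf_le_limsup_of_mapClusterPt hcluster
    _ ≤ limsup (fun q => ⨅ y, F q y) atTop := hmin
    _ ≤ gammaLimsup F y := limsup_iInf_le_gammaLimsup y

end

/-- Theorem 2.2: the fundamental theorem of Γ-convergence, cluster-point form. -/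
theorem fundamental_theorem_gamma_convergence {X : Type*} [TopologicalSpace X]
    (F : ℕ → X → EReal) (Flim : X → EReal)
    (hconv : GammaConvergesTo F Flim)
    (xs : ℕ → X) (hmin : ∀ q : ℕ, ∀ y : X, F q (xs q) ≤ F q y)
    (xstar : X)
    (hcluster : ∀ N ∈ nhds xstar, {q : ℕ | xs q ∈ N}.Infinite) :
    ∀ y : X, Flim xstar ≤ Flim y := by
  intro y
  rw [← (hconv xstar).1, ← (hconv y).2]
  exact fundamental_theorem_gamma_convergence_general
    (limsup_le_limsup (.of_forall fun q => le_iInf (hmin q)))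
    (mapClusterPt_iff_frequently.2 fun N hN =>
      Nat.frequently_atTop_iff_infinite.2 (hcluster N hN)) y
end
end

section
/- (Proposition 2.3: sequential criterion for Γ-convergence in first-countable spaces.) Let X be a first-countable topological space, F_q : X → EReal (q ∈ ℕ) a sequence of functions and F : X → EReal. Then F_q Γ-converges to F (in the sense that Γ-liminf F_q(x) = Γ-limsup F_q(x) = F(x) for all x ∈ X) if and only if for every x ∈ X both of the following hold: (i) (limit-inferior inequality) for every sequence (x_q) in X with x_q → x, F(x) ≤ liminf_{q→∞} F_q(x_q); and (ii) (recovery sequence) there exists a sequence (x_q) in X with x_q → x such that limsup_{q→∞} F_q(x_q) ≤ F(x). -/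
open Filter

noncomputable section

/-!
The Γ-lower and Γ-upper limits at `x` are heights at which the epigraphs of the `F q`, as subsets of
`X × EReal`, accumulate over `x`: every neighbourhood of `(x, gammaLiminf F x)` meets infinitely
many of the epigraphs, and every neighbourhood of `(x, gammaLimsup F x)` meets all but finitely many
of them. In a first-countable space a diagonal argument chooses points of the epigraphs that
converge to `(x, gammaLiminf F x)`, respectively `(x, gammaLimsup F x)`; their projections to `X`
are sequences along which the Γ-limits are attained. Along any other sequence the Γ-limits are
lower bounds.
-/

section SequenceSelection

variable {α : Type*} {l : Filter α} {S : ℕ → Set α}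

theorem tendsto_extend_cofinite {ι κ : Type*} {φ : ι → κ} {u : ι → α} {v : κ → α}
    (hφ : Function.Injective φ) (hu : Tendsto u cofinite l) (hv : Tendsto v cofinite l) :
    Tendsto (Function.extend φ u v) cofinite l := by
  intro s hs
  have hfinite : (φ '' (u ⁻¹' s)ᶜ ∪ (v ⁻¹' s)ᶜ).Finite :=
    ((mem_cofinite.1 (hu hs)).image φ).union (mem_cofinite.1 (hv hs))
  refine mem_cofinite.2 (hfinite.subset fun k hk => ?_)
  by_cases h : ∃ i, φ i = k
  · obtain ⟨i, rfl⟩ := h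
    exact .inl ⟨i, by simpa [hφ.extend_apply] using hk, rfl⟩
  · exact .inr (by simpa [Function.extend_apply' _ _ _ h] using hk)

theorem exists_mem_inter_of_antitone [Nonempty α] {B : ℕ → Set α} (hB : Antitone B)
    (s : Set α) (n : ℕ) : ∃ a, ∀ k ≤ n, (s ∩ B k).Nonempty → a ∈ s ∩ B k := by
  classical
  by_cases h : ∃ k ≤ n, (s ∩ B k).Nonempty
  · obtain ⟨m, hmn, hm⟩ := h
    obtain ⟨a, has, haB⟩ := Nat.findGreatest_spec (P := fun k => (s ∩ B k).Nonempty) hmn hm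
    exact ⟨a, fun k hkn hk => ⟨has, hB (Nat.le_findGreatest hkn hk) haB⟩⟩
  · exact ⟨Classical.arbitrary α, fun k hkn hk => absurd ⟨k, hkn, hk⟩ h⟩

theorem exists_seq_tendsto_eventually_mem [l.IsCountablyGenerated]
    (h : ∀ s ∈ l, ∀ᶠ n in atTop, (S n ∩ s).Nonempty) :
    ∃ u : ℕ → α, Tendsto u atTop l ∧ ∀ᶠ n in atTop, u n ∈ S n := by
  obtain ⟨B, hB⟩ := l.exists_antitone_basis
  have hmeet (k : ℕ) : ∀ᶠ n in atTop, (S n ∩ B k).Nonempty := h (B k) (hB.mem k)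
  have : Nonempty α := (hmeet 0).exists.elim fun _ hn => hn.nonempty
  choose u hu using fun n => exists_mem_inter_of_antitone hB.antitone (S n) n
  have hmem (k : ℕ) : ∀ᶠ n in atTop, u n ∈ S n ∩ B k := by
    filter_upwards [hmeet k, eventually_ge_atTop k] with n hn hkn using hu n k hkn hn
  exact ⟨u, hB.tendsto_right_iff.2 fun k _ => (hmem k).mono fun _ hn => hn.2,
    (hmem 0).mono fun _ hn => hn.1⟩

theorem exists_seq_tendsto_frequently_mem [l.IsCountablyGenerated]
    (h : ∀ s ∈ l, ∃ᶠ n in atTop, (S n ∩ s).Nonempty) :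
    ∃ u : ℕ → α, Tendsto u atTop l ∧ ∃ᶠ n in atTop, u n ∈ S n := by
  obtain ⟨B, hB⟩ := l.exists_antitone_basis
  obtain ⟨φ, hφ, hmeet⟩ := extraction_forall_of_frequently fun k => h (B k) (hB.mem k)
  choose y hyS hyB using hmeet
  have : l.NeBot := hB.neBot_iff.2 fun {k} _ => ⟨y k, hyB k⟩
  obtain ⟨v, hv⟩ := l.exists_seq_tendsto
  refine ⟨Function.extend φ y v, ?_, hφ.tendsto_atTop.frequently (.of_forall fun k => ?_)⟩
  · rw [← Nat.cofinite_eq_atTop] at hv ⊢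
    exact tendsto_extend_cofinite hφ.injective (Nat.cofinite_eq_atTop ▸ hB.tendsto hyB) hv
  · simpa only [hφ.injective.extend_apply] using hyS k

end SequenceSelection

section Epigraph

open scoped Topology

/-- The epigraph of a function. Heights range over the whole codomain, so for `β = EReal` the points
`(x, ⊤)` belong to every epigraph. -/
def epigraph {α β : Type*} [LE β] (f : α → β) : Set (α × β) :=
  {p | f p.1 ≤ p.2}

theorem mem_epigraph {α β : Type*} [LE β] {f : α → β} {p : α × β} :
    p ∈ epigraph f ↔ f p.1 ≤ p.2 :=
  Iff.rfl

theorem exists_forall_iInf_lt_imp_epigraph_inter_nonempty {X β : Type*} [TopologicalSpace X]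
    [CompleteLinearOrder β] [TopologicalSpace β] [OrderTopology β]
    {x : X} {a : β} (ha : a < ⊤) {s : Set (X × β)} (hs : s ∈ 𝓝 (x, a)) :
    ∃ N ∈ 𝓝 x, ∃ b > a, ∀ f : X → β, ⨅ y ∈ N, f y < b → (epigraph f ∩ s).Nonempty := by
  obtain ⟨N, hN, V, hV, hNV⟩ := mem_nhds_prod_iff.1 hs
  obtain ⟨b, hab, hbV⟩ := exists_Ico_subset_of_mem_nhds hV ⟨⊤, ha⟩
  refine ⟨N, hN, b, hab, fun f hf => ?_⟩
  obtain ⟨y, hyN, hyb⟩ : ∃ y ∈ N, f y < b := by simpa only [iInf_lt_iff, exists_prop] using hf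
  exact ⟨(y, max a (f y)), mem_epigraph.2 (le_max_right _ _),
    hNV ⟨hyN, hbV ⟨le_max_left _ _, max_lt hab hyb⟩⟩⟩

end Epigraph

theorem eventually_iInf_le_apply_of_tendsto {ι α β : Type*} [CompleteLattice β] {k : Filter ι}
    {l : Filter α} {u : ι → α} (hu : Tendsto u k l) (F : ι → α → β) {s : Set α} (hs : s ∈ l) :
    ∀ᶠ i in k, ⨅ a ∈ s, F i a ≤ F i (u i) :=
  (hu.eventually_mem hs).mono fun i hi => iInf₂_le (u i) hi

section GammaLimits

open scoped Topology

variable {X : Type*} [TopologicalSpace X] {F : ℕ → X → EReal} {x : X}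

theorem gammaLiminf_le_gammaLimsup : gammaLiminf F x ≤ gammaLimsup F x :=
  iSup₂_mono fun _ _ => liminf_le_limsup

theorem gammaConvergesTo_iff_le {Flim : X → EReal} :
    GammaConvergesTo F Flim ↔ ∀ x, Flim x ≤ gammaLiminf F x ∧ gammaLimsup F x ≤ Flim x :=
  forall_congr' fun _ =>
    ⟨fun h => ⟨h.1.ge, h.2.le⟩, fun h =>
      ⟨(gammaLiminf_le_gammaLimsup.trans h.2).antisymm h.1,
        h.2.antisymm (h.1.trans gammaLiminf_le_gammaLimsup)⟩⟩

theorem gammaLiminf_le_liminf_of_tendsto {xs : ℕ → X} (hxs : Tendsto xs atTop (𝓝 x)) :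
    gammaLiminf F x ≤ liminf (fun q => F q (xs q)) atTop :=
  iSup₂_le fun _ hN => liminf_le_liminf (eventually_iInf_le_apply_of_tendsto hxs F hN)

theorem gammaLimsup_le_limsup_of_tendsto {xs : ℕ → X} (hxs : Tendsto xs atTop (𝓝 x)) :
    gammaLimsup F x ≤ limsup (fun q => F q (xs q)) atTop :=
  iSup₂_le fun _ hN => limsup_le_limsup (eventually_iInf_le_apply_of_tendsto hxs F hN)

theorem frequently_epigraph_inter_nonempty_of_mem_nhds_gammaLiminf {s : Set (X × EReal)}
    (hs : s ∈ 𝓝 (x, gammaLiminf F x)) :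
    ∃ᶠ q in atTop, (epigraph (F q) ∩ s).Nonempty := by
  rcases eq_top_or_lt_top (gammaLiminf F x) with htop | hlt
  · rw [htop] at hs
    exact .of_forall fun q => ⟨(x, ⊤), mem_epigraph.2 le_top, mem_of_mem_nhds hs⟩
  · obtain ⟨N, hN, b, hb, hmeet⟩ := exists_forall_iInf_lt_imp_epigraph_inter_nonempty hlt hs
    have hliminf : liminf (fun q => ⨅ y ∈ N, F q y) atTop < b := (le_iSup₂ N hN).trans_lt hb
    exact (frequently_lt_of_liminf_lt (h := hliminf)).mono fun q => hmeet (F q)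

theorem eventually_epigraph_inter_nonempty_of_mem_nhds_gammaLimsup {s : Set (X × EReal)}
    (hs : s ∈ 𝓝 (x, gammaLimsup F x)) :
    ∀ᶠ q in atTop, (epigraph (F q) ∩ s).Nonempty := by
  rcases eq_top_or_lt_top (gammaLimsup F x) with htop | hlt
  · rw [htop] at hs
    exact .of_forall fun q => ⟨(x, ⊤), mem_epigraph.2 le_top, mem_of_mem_nhds hs⟩
  · obtain ⟨N, hN, b, hb, hmeet⟩ := exists_forall_iInf_lt_imp_epigraph_inter_nonempty hlt hs
    have hlimsup : limsup (fun q => ⨅ y ∈ N, F q y) atTop < b := (le_iSup₂ N hN).trans_lt hb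
    exact (eventually_lt_of_limsup_lt hlimsup).mono fun q => hmeet (F q)

theorem exists_seq_tendsto_liminf_le_gammaLiminf [FirstCountableTopology X]
    (F : ℕ → X → EReal) (x : X) :
    ∃ xs : ℕ → X, Tendsto xs atTop (𝓝 x) ∧
      liminf (fun q => F q (xs q)) atTop ≤ gammaLiminf F x := by
  obtain ⟨u, hu, hmem⟩ := exists_seq_tendsto_frequently_mem
    fun s (hs : s ∈ 𝓝 (x, gammaLiminf F x)) =>
      frequently_epigraph_inter_nonempty_of_mem_nhds_gammaLiminf hs
  refine ⟨fun q => (u q).1, hu.fst_nhds, (liminf_le_iff).2 fun c hc => ?_⟩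
  exact (hmem.and_eventually (hu.snd_nhds.eventually_lt_const hc)).mono
    fun q hq => hq.1.trans_lt hq.2

theorem exists_seq_tendsto_limsup_le_gammaLimsup [FirstCountableTopology X]
    (F : ℕ → X → EReal) (x : X) :
    ∃ xs : ℕ → X, Tendsto xs atTop (𝓝 x) ∧
      limsup (fun q => F q (xs q)) atTop ≤ gammaLimsup F x := by
  obtain ⟨u, hu, hmem⟩ := exists_seq_tendsto_eventually_mem
    fun s (hs : s ∈ 𝓝 (x, gammaLimsup F x)) =>
      eventually_epigraph_inter_nonempty_of_mem_nhds_gammaLimsup hs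
  refine ⟨fun q => (u q).1, hu.fst_nhds, (limsup_le_iff).2 fun c hc => ?_⟩
  exact (hmem.and (hu.snd_nhds.eventually_lt_const hc)).mono fun q hq => hq.1.trans_lt hq.2

theorem le_gammaLiminf_iff_forall_seq [FirstCountableTopology X] {a : EReal} :
    a ≤ gammaLiminf F x ↔
      ∀ xs : ℕ → X, Tendsto xs atTop (𝓝 x) → a ≤ liminf (fun q => F q (xs q)) atTop := by
  refine ⟨fun h xs hxs => h.trans (gammaLiminf_le_liminf_of_tendsto hxs), fun h => ?_⟩
  obtain ⟨xs, hxs, hle⟩ := exists_seq_tendsto_liminf_le_gammaLiminf F x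
  exact (h xs hxs).trans hle

theorem gammaLimsup_le_iff_exists_seq [FirstCountableTopology X] {a : EReal} :
    gammaLimsup F x ≤ a ↔
      ∃ xs : ℕ → X, Tendsto xs atTop (𝓝 x) ∧ limsup (fun q => F q (xs q)) atTop ≤ a := by
  refine ⟨fun h => ?_, fun ⟨xs, hxs, hle⟩ => (gammaLimsup_le_limsup_of_tendsto hxs).trans hle⟩
  obtain ⟨xs, hxs, hle⟩ := exists_seq_tendsto_limsup_le_gammaLimsup F x
  exact ⟨xs, hxs, hle.trans h⟩

end GammaLimits

open Topology in
/-- Proposition 2.3: sequential criterion for Γ-convergence in first-countable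
spaces. -/
theorem gamma_convergence_sequential_criterion {X : Type*} [TopologicalSpace X]
    [FirstCountableTopology X] (F : ℕ → X → EReal) (Flim : X → EReal) :
    GammaConvergesTo F Flim ↔
      ∀ x : X,
        (∀ xs : ℕ → X, Tendsto xs atTop (𝓝 x) →
          Flim x ≤ Filter.liminf (fun q => F q (xs q)) atTop) ∧
        (∃ xs : ℕ → X, Tendsto xs atTop (𝓝 x) ∧
          Filter.limsup (fun q => F q (xs q)) atTop ≤ Flim x) := by
  simp only [gammaConvergesTo_iff_le, le_gammaLiminf_iff_forall_seq, gammaLimsup_le_iff_exists_seq]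
end
end
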